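/- arXiv:2408.04555 — 7 statements merged into one kernel-verified Lean document; each statement's English description precedes it below -/
import Mathlib

section
/- In the second-price auction with n ≥ 1 buyers, truthful bidding is a dominant strategy: for every buyer i, every true value t ∈ ℝ≥0, every vector of the other buyers' reported bids, and every possible report b ∈ ℝ≥0 by buyer i, the utility of buyer i (with true value t) when she reports t is at least her utility when she reports b. -/
open scoped NNReal

/-- Buyer `i` wins the second-price auction under reported bids `v`:
her pair `(v i, i)` is lexicographically largest (ties broken by index). -/
def SPWins {n : ℕ} (v : Fin n → ℝ≥0) (i : Fin n) : Prop :=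
  ∀ j : Fin n, j ≠ i → v j < v i ∨ (v j = v i ∧ j < i)

/-- Payment of the winner: the highest bid among the other buyers (`0` if `n = 1`). -/
noncomputable def SPPayment {n : ℕ} (v : Fin n → ℝ≥0) (i : Fin n) : ℝ≥0 :=
  (Finset.univ.erase i).sup v

open Classical in
/-- Utility of buyer `i` with true value `t` under reported bid vector `v`:
`t` minus her payment if she wins, and `0` otherwise. -/
noncomputable def SPUtility {n : ℕ} (v : Fin n → ℝ≥0) (i : Fin n) (t : ℝ≥0) : ℝ :=
  if SPWins v i then (t : ℝ) - (SPPayment v i : ℝ) else 0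

theorem SPPayment_update {n : ℕ} (v : Fin n → ℝ≥0) (i : Fin n) (b : ℝ≥0) :
    SPPayment (Function.update v i b) i = SPPayment v i := by
  unfold SPPayment
  refine Finset.sup_congr rfl fun j hj => ?_
  rw [Function.update_of_ne (Finset.ne_of_mem_erase hj)]

theorem SPPayment_le_of_wins {n : ℕ} (v : Fin n → ℝ≥0) (i : Fin n) (t : ℝ≥0)
    (h : SPWins (Function.update v i t) i) : SPPayment v i ≤ t := by
  unfold SPPayment
  refine Finset.sup_le fun j hj => ?_
  have hne := Finset.ne_of_mem_erase hj
  have := h j hne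
  rw [Function.update_of_ne hne, Function.update_self] at this
  rcases this with h | h
  · exact h.le
  · exact h.1.le

theorem le_SPPayment_of_not_wins {n : ℕ} (v : Fin n → ℝ≥0) (i : Fin n) (t : ℝ≥0)
    (h : ¬ SPWins (Function.update v i t) i) : t ≤ SPPayment v i := by
  by_contra hlt
  rw [not_le] at hlt
  refine h fun j hne => Or.inl ?_
  rw [Function.update_of_ne hne, Function.update_self]
  refine lt_of_le_of_lt ?_ hlt
  unfold SPPayment
  exact Finset.le_sup (f := v) (Finset.mem_erase.2 ⟨hne, Finset.mem_univ j⟩)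

/-- In the second-price auction with `n ≥ 1` buyers, truthful bidding is a dominant
strategy: for every buyer `i`, every true value `t`, every vector of the other buyers'
reported bids, and every possible report `b` by buyer `i`, the utility of buyer `i`
(with true value `t`) when she reports `t` is at least her utility when she reports `b`. -/
theorem secondPrice_incentiveCompatible {n : ℕ} (hn : 1 ≤ n) (i : Fin n) (t : ℝ≥0)
    (v : Fin n → ℝ≥0) (b : ℝ≥0) :
    SPUtility (Function.update v i b) i t ≤ SPUtility (Function.update v i t) i t := by
  unfold SPUtility
  rw [SPPayment_update, SPPayment_update]
  by_cases ht : SPWins (Function.update v i t) i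
  · have h1 : (SPPayment v i : ℝ) ≤ t := by exact_mod_cast SPPayment_le_of_wins v i t ht
    rw [if_pos ht]
    split_ifs <;> linarith
  · have h1 : (t : ℝ) ≤ SPPayment v i := by exact_mod_cast le_SPPayment_of_not_wins v i t ht
    rw [if_neg ht]
    split_ifs <;> linarith
end

section
/- In the (m+1)-th price auction (MPA), truthful bidding is a dominant strategy: for every buyer i, every true per-item value t ∈ ℝ≥0, every vector of the other buyers' reported bids, and every possible report b ∈ ℝ≥0 by buyer i, the utility of buyer i (with true value t) when she reports t is at least her utility when she reports b. -/
open scoped NNReal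

/-- `MPABeats v j i`: buyer `j`'s pair `(v j, j)` is lexicographically greater than
buyer `i`'s pair `(v i, i)` (ties broken by the index order). -/
def MPABeats {n : ℕ} (v : Fin n → ℝ≥0) (j i : Fin n) : Prop :=
  v i < v j ∨ (v i = v j ∧ i < j)

open Classical in
/-- The winner set `Top_m(v)` of the `(m+1)`-th price auction: the `min(m, n)` buyers whose
pairs `(v i, i)` are highest in the lexicographic order, i.e. those buyers beaten by
fewer than `m` others. -/
noncomputable def TopM {n : ℕ} (m : ℕ) (v : Fin n → ℝ≥0) : Finset (Fin n) :=
  Finset.univ.filter fun i => (Finset.univ.filter fun j => MPABeats v j i).card < m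

/-- Payment of each winner: the highest bid among the non-winners
(`0` if every buyer is a winner). -/
noncomputable def MPAPayment {n : ℕ} (m : ℕ) (v : Fin n → ℝ≥0) : ℝ≥0 :=
  (Finset.univ \ TopM m v).sup v

/-- Utility of buyer `i` with true per-item value `t` under reported bid vector `v`:
`t` minus her payment if she is a winner, and `0` otherwise. -/
noncomputable def MPAUtility {n : ℕ} (m : ℕ) (v : Fin n → ℝ≥0) (i : Fin n) (t : ℝ≥0) : ℝ :=
  if i ∈ TopM m v then (t : ℝ) - (MPAPayment m v : ℝ) else 0

open Classical in
/-- Critical price faced by buyer `i`. -/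
noncomputable def critP {n : ℕ} (m : ℕ) (v : Fin n → ℝ≥0) (i : Fin n) : ℝ≥0 :=
  (Finset.univ.filter fun j => j ≠ i ∧
    m ≤ (Finset.univ.filter fun k => k ≠ i ∧ MPABeats v k j).card + 1).sup v

theorem MPABeats.tr {n : ℕ} {v : Fin n → ℝ≥0} {a b c : Fin n} (h : MPABeats v a b)
    (h' : MPABeats v b c) : MPABeats v a c := by
  unfold MPABeats at *
  rcases h with h | ⟨h, h2⟩ <;> rcases h' with h' | ⟨h', h3⟩
  · exact Or.inl (h'.trans h)
  · exact Or.inl (h' ▸ h)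
  · exact Or.inl (h ▸ h')
  · exact Or.inr ⟨h'.trans h, h3.trans h2⟩

theorem MPABeats.irr {n : ℕ} {v : Fin n → ℝ≥0} {a : Fin n} (h : MPABeats v a a) : False := by
  unfold MPABeats at h
  rcases h with h | ⟨_, h⟩ <;> exact lt_irrefl _ h

theorem MPABeats.tot {n : ℕ} (v : Fin n → ℝ≥0) {a b : Fin n} (h : a ≠ b) :
    MPABeats v a b ∨ MPABeats v b a := by
  unfold MPABeats
  rcases lt_trichotomy (v a) (v b) with h1 | h1 | h1
  · exact Or.inr (Or.inl h1)
  · rcases lt_or_gt_of_ne h with h2 | h2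
    · exact Or.inr (Or.inr ⟨h1, h2⟩)
    · exact Or.inl (Or.inr ⟨h1.symm, h2⟩)
  · exact Or.inl (Or.inl h1)

theorem MPABeats.le {n : ℕ} {v : Fin n → ℝ≥0} {a b : Fin n} (h : MPABeats v a b) :
    v b ≤ v a := by
  unfold MPABeats at h
  rcases h with h | ⟨h, _⟩
  exacts [h.le, h.le]

theorem critP_update {n : ℕ} (m : ℕ) (v : Fin n → ℝ≥0) (i : Fin n) (x y : ℝ≥0) :
    critP m (Function.update v i x) i = critP m (Function.update v i y) i := by
  classical
  unfold critP
  apply Finset.sup_congr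
  · apply Finset.filter_congr
    intro j _
    refine and_congr_right fun hj => ?_
    have : (Finset.univ.filter fun k => k ≠ i ∧ MPABeats (Function.update v i x) k j) =
        (Finset.univ.filter fun k => k ≠ i ∧ MPABeats (Function.update v i y) k j) := by
      apply Finset.filter_congr
      intro k _
      refine and_congr_right fun hk => ?_
      simp [MPABeats, Function.update_of_ne hj, Function.update_of_ne hk]
    rw [this]
  · intro j hj
    have hj := (Finset.mem_filter.1 hj).2.1
    simp [Function.update_of_ne hj]

theorem winner_beats {n m : ℕ} {v : Fin n → ℝ≥0} {i j : Fin n} (hi : i ∈ TopM m v)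
    (hj : j ∉ TopM m v) : MPABeats v i j := by
  classical
  have hne : i ≠ j := fun h => hj (h ▸ hi)
  rcases MPABeats.tot v hne with h | h
  · exact h
  · exfalso
    simp only [TopM, Finset.mem_filter, Finset.mem_univ, true_and] at hi hj
    apply hj
    refine lt_of_le_of_lt (Finset.card_le_card ?_) hi
    intro k hk
    simp only [Finset.mem_filter, Finset.mem_univ, true_and] at hk ⊢
    exact hk.tr h

theorem payment_eq {n m : ℕ} {v : Fin n → ℝ≥0} {i : Fin n} (hi : i ∈ TopM m v) :
    MPAPayment m v = critP m v i := by
  classical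
  unfold MPAPayment critP
  congr 1
  ext j
  simp only [Finset.mem_sdiff, Finset.mem_filter, Finset.mem_univ, true_and]
  have key : ∀ j, MPABeats v i j → (Finset.univ.filter fun k => MPABeats v k j) =
      insert i (Finset.univ.filter fun k => k ≠ i ∧ MPABeats v k j) := by
    intro j hb
    ext k
    simp only [Finset.mem_insert, Finset.mem_filter, Finset.mem_univ, true_and]
    by_cases h : k = i
    · subst h; simp [hb]
    · simp [h]
  have key2 : ∀ j, MPABeats v i j → (Finset.univ.filter fun k => MPABeats v k j).card =
      (Finset.univ.filter fun k => k ≠ i ∧ MPABeats v k j).card + 1 := by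
    intro j hb
    rw [key j hb, Finset.card_insert_of_notMem (by simp)]
  constructor
  · intro hj
    refine ⟨fun h => hj (h ▸ hi), ?_⟩
    rw [← key2 j (winner_beats hi hj)]
    simpa [TopM] using hj
  · rintro ⟨hne, hc⟩
    rcases MPABeats.tot v hne with h | h
    · exfalso
      simp only [TopM, Finset.mem_filter, Finset.mem_univ, true_and] at hi
      have hs : insert j (Finset.univ.filter fun k => k ≠ i ∧ MPABeats v k j) ⊆
          Finset.univ.filter fun k => MPABeats v k i := by
        intro k hk
        simp only [Finset.mem_insert, Finset.mem_filter, Finset.mem_univ, true_and] at hk ⊢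
        rcases hk with rfl | hk
        · exact h
        · exact hk.2.tr h
      have := Finset.card_le_card hs
      rw [Finset.card_insert_of_notMem
        (fun hh => (Finset.mem_filter.1 hh).2.2.irr)] at this
      omega
    · rw [← key2 j h] at hc
      simpa [TopM] using hc

theorem payment_le {n m : ℕ} {v : Fin n → ℝ≥0} {i : Fin n} (hi : i ∈ TopM m v) :
    MPAPayment m v ≤ v i := by
  unfold MPAPayment
  refine Finset.sup_le fun j hj => ?_
  exact (winner_beats hi (Finset.mem_sdiff.1 hj).2).le

theorem le_critP {n m : ℕ} (hm : 1 ≤ m) {v : Fin n → ℝ≥0} {i : Fin n} (hi : i ∉ TopM m v) :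
    v i ≤ critP m v i := by
  classical
  simp only [TopM, Finset.mem_filter, Finset.mem_univ, true_and, not_lt] at hi
  have hne : (Finset.univ.filter fun k => MPABeats v k i).Nonempty :=
    Finset.card_pos.1 (by omega)
  obtain ⟨j, hj, hmin⟩ := Finset.exists_min_image _ (fun k => toLex (v k, k)) hne
  have hji : MPABeats v j i := by simpa using hj
  refine hji.le.trans ?_
  unfold critP
  apply Finset.le_sup (f := v)
  simp only [Finset.mem_filter, Finset.mem_univ, true_and]
  refine ⟨fun h => (h ▸ hji : MPABeats v i i).irr, hi.trans ?_⟩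
  rw [← Finset.card_erase_add_one hj]
  gcongr
  intro k hk
  simp only [Finset.mem_erase, Finset.mem_filter, Finset.mem_univ, true_and] at hk ⊢
  refine ⟨fun h => (h ▸ hk.2 : MPABeats v i i).irr, ?_⟩
  have h2 := hmin k (by simpa using hk.2)
  rcases MPABeats.tot v hk.1 with h | h
  · exact h
  · exfalso
    rw [Prod.Lex.toLex_le_toLex] at h2
    unfold MPABeats at h
    simp only at h2
    rcases h with h | ⟨h, h3⟩ <;> rcases h2 with h2 | ⟨h2, h4⟩
    · exact lt_asymm h h2
    · exact h.ne h2.symm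
    · exact h2.ne h.symm
    · exact absurd h3 (not_lt.2 h4)

/-- In the `(m+1)`-th price auction with `m ≥ 1` items, truthful bidding is a dominant
strategy: for every buyer `i`, every true per-item value `t`, every vector of the other
buyers' reported bids, and every possible report `b` by buyer `i`, the utility of buyer
`i` (with true value `t`) when she reports `t` is at least her utility when she
reports `b`. -/
theorem MPA_incentiveCompatible {n m : ℕ} (hm : 1 ≤ m) (i : Fin n) (t : ℝ≥0)
    (v : Fin n → ℝ≥0) (b : ℝ≥0) :
    MPAUtility m (Function.update v i b) i t ≤ MPAUtility m (Function.update v i t) i t := by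
  classical
  have e := critP_update m v i b t
  unfold MPAUtility
  by_cases ht : i ∈ TopM m (Function.update v i t) <;>
    by_cases hb : i ∈ TopM m (Function.update v i b)
  · rw [if_pos ht, if_pos hb, payment_eq ht, payment_eq hb, e]
  · rw [if_pos ht, if_neg hb]
    have := payment_le ht
    rw [Function.update_self] at this
    exact sub_nonneg.2 (NNReal.coe_le_coe.2 this)
  · rw [if_neg ht, if_pos hb, payment_eq hb, e]
    have := le_critP hm ht
    rw [Function.update_self] at this
    exact sub_nonpos.2 (NNReal.coe_le_coe.2 this)
  · rw [if_neg ht, if_neg hb]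
end

section
/- The (m+1)-th price auction (MPA) satisfies the non-sensitivity property: if v and v' are bid vectors that agree on all buyers except possibly buyer i, buyer i is a winner under v (i.e., i ∈ Top_m(v)), and buyer i is still a winner under v' (i.e., i ∈ Top_m(v')), then the winner sets coincide: Top_m(v') = Top_m(v). Consequently, the allocation of every buyer is unchanged. -/
open scoped NNReal

theorem MPABeats_trans' {n : ℕ} {v : Fin n → ℝ≥0} {a b c : Fin n}
    (h1 : MPABeats v a b) (h2 : MPABeats v b c) : MPABeats v a c := by
  unfold MPABeats at *
  rcases h1 with h1 | ⟨h1, h1'⟩ <;> rcases h2 with h2 | ⟨h2, h2'⟩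
  · exact Or.inl (h2.trans h1)
  · exact Or.inl (h2 ▸ h1)
  · exact Or.inl (h1 ▸ h2)
  · exact Or.inr ⟨h2.trans h1, h2'.trans h1'⟩

theorem MPABeats_irrefl' {n : ℕ} {v : Fin n → ℝ≥0} {a : Fin n} : ¬ MPABeats v a a := by
  simp [MPABeats]

theorem MPABeats_total' {n : ℕ} {v : Fin n → ℝ≥0} {a b : Fin n} (h : a ≠ b) :
    MPABeats v a b ∨ MPABeats v b a := by
  unfold MPABeats
  rcases lt_trichotomy (v a) (v b) with h1 | h1 | h1
  · exact Or.inr (Or.inl h1)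
  · rcases lt_or_gt_of_ne h with h2 | h2
    · exact Or.inr (Or.inr ⟨h1, h2⟩)
    · exact Or.inl (Or.inr ⟨h1.symm, h2⟩)
  · exact Or.inl (Or.inl h1)

open Classical in
theorem TopM_char {n m : ℕ} (v : Fin n → ℝ≥0) (i k : Fin n) (hk : k ≠ i) (hi : i ∈ TopM m v) :
    k ∈ TopM m v ↔
      (Finset.univ.filter fun j => j ≠ i ∧ MPABeats v j k).card + 1 < m := by
  simp only [TopM, Finset.mem_filter, Finset.mem_univ, true_and] at hi ⊢
  rcases MPABeats_total' (v := v) hk with h | h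
  · have hA : (Finset.univ.filter fun j => MPABeats v j k)
        = Finset.univ.filter fun j => j ≠ i ∧ MPABeats v j k := by
      ext j
      simp only [Finset.mem_filter, Finset.mem_univ, true_and]
      refine ⟨fun hj => ⟨?_, hj⟩, fun hj => hj.2⟩
      rintro rfl
      exact MPABeats_irrefl' (MPABeats_trans' h hj)
    have hlt : (Finset.univ.filter fun j => j ≠ i ∧ MPABeats v j k).card
        < (Finset.univ.filter fun j => MPABeats v j i).card := by
      apply Finset.card_lt_card
      rw [Finset.ssubset_iff_of_subset]
      · exact ⟨k, by simpa using h, by simp [MPABeats_irrefl']⟩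
      · intro j hj
        simp only [Finset.mem_filter, Finset.mem_univ, true_and] at hj ⊢
        exact MPABeats_trans' hj.2 h
    rw [hA]
    omega
  · have hA : (Finset.univ.filter fun j => MPABeats v j k)
        = insert i (Finset.univ.filter fun j => j ≠ i ∧ MPABeats v j k) := by
      ext j
      simp only [Finset.mem_filter, Finset.mem_univ, true_and, Finset.mem_insert]
      by_cases hj : j = i
      · subst hj; simp [h]
      · simp [hj]
    rw [hA, Finset.card_insert_of_notMem (by simp)]

/-- The `(m+1)`-th price auction satisfies the non-sensitivity property: if `v` and `v'`
are bid vectors agreeing on all buyers except possibly buyer `i`, buyer `i` is a winner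
under `v`, and buyer `i` is still a winner under `v'`, then the winner sets coincide
(hence the allocation of every buyer is unchanged). -/
theorem MPA_nonSensitive {n m : ℕ} (hm : 1 ≤ m) (v v' : Fin n → ℝ≥0) (i : Fin n)
    (hagree : ∀ j : Fin n, j ≠ i → v' j = v j)
    (hi : i ∈ TopM m v) (hi' : i ∈ TopM m v') :
    TopM m v' = TopM m v := by
  classical
  ext k
  by_cases hk : k = i
  · subst hk; simp [hi, hi']
  · rw [TopM_char v i k hk hi, TopM_char v' i k hk hi']
    have : ∀ j, (j ≠ i ∧ MPABeats v' j k) ↔ (j ≠ i ∧ MPABeats v j k) := by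
      intro j
      refine and_congr_right fun hj => ?_
      unfold MPABeats
      rw [hagree j hj, hagree k hk]
    refine Iff.of_eq (congrArg (fun s : Finset (Fin n) => s.card + 1 < m) ?_)
    ext j
    rw [Finset.mem_filter, Finset.mem_filter, this j]
end

section
/- The LOS greedy mechanism for single-minded buyers satisfies the non-sensitivity property: if b and b' are bid profiles that agree on all buyers except possibly buyer i, buyer i is a winner under b (i.e., i ∈ W(b)), and buyer i is still a winner under b' (i.e., i ∈ W(b')), then the winner sets coincide: W(b') = W(b). Consequently, every buyer receives exactly the same bundle under b and under b'. -/
open scoped NNReal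

/-- Average valuation of (single-minded) buyer `i`: her bid for her demanded bundle
divided by the number of items in the bundle. -/
noncomputable def avgVal {n m : ℕ} (d : Fin n → Finset (Fin m)) (b : Fin n → ℝ≥0)
    (i : Fin n) : ℝ≥0 :=
  b i / ((d i).card : ℝ≥0)

/-- `procBefore d b i j`: buyer `i` is processed no later than buyer `j`, i.e. the pair
`(av i, i)` is lexicographically no smaller than `(av j, j)` (buyers are processed in
decreasing lexicographic order of these pairs, ties broken by the index order). -/
noncomputable def procBefore {n m : ℕ} (d : Fin n → Finset (Fin m)) (b : Fin n → ℝ≥0)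
    (i j : Fin n) : Prop :=
  toLex (avgVal d b j, j) ≤ toLex (avgVal d b i, i)

open Classical in
/-- The processing order of the LOS mechanism: all buyers, listed in decreasing
lexicographic order of the pairs `(av i, i)`. -/
noncomputable def procList {n m : ℕ} (d : Fin n → Finset (Fin m)) (b : Fin n → ℝ≥0) :
    List (Fin n) :=
  List.insertionSort (procBefore d b) (List.finRange n)

/-- One step of the LOS greedy allocation: buyer `i` is added to the current winner set
`W` iff her demanded bundle is disjoint from the bundles of all earlier winners. -/
def greedyStep {n m : ℕ} (d : Fin n → Finset (Fin m)) (W : Finset (Fin n)) (i : Fin n) :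
    Finset (Fin n) :=
  if Disjoint (d i) (W.biUnion d) then insert i W else W

/-- `LOSWinners d b`: the winner set `W(b)` of the LOS greedy mechanism, obtained by
processing the buyers in decreasing order of average valuation (ties broken by index). -/
noncomputable def LOSWinners {n m : ℕ} (d : Fin n → Finset (Fin m)) (b : Fin n → ℝ≥0) :
    Finset (Fin n) :=
  (procList d b).foldl (greedyStep d) ∅

theorem greedy_char {n m : ℕ} (d : Fin n → Finset (Fin m)) (r : Fin n → Fin n → Prop)
    (irr : ∀ a, ¬ r a a) (asy : ∀ a c, r a c → ¬ r c a) (l : List (Fin n)) :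
    l.Pairwise r → (∀ j ∈ l.foldl (greedyStep d) ∅, j ∈ l) ∧
      ∀ j ∈ l, (j ∈ l.foldl (greedyStep d) ∅ ↔
        ∀ k ∈ l.foldl (greedyStep d) ∅, r k j → Disjoint (d j) (d k)) := by
  induction l using List.reverseRecOn with
  | nil => intro _; simp
  | append_singleton l a ih =>
    intro h
    rw [List.pairwise_append] at h
    obtain ⟨h1, -, h3⟩ := h
    obtain ⟨hs, hc⟩ := ih h1
    have h3' : ∀ k ∈ l, r k a := fun k hk => h3 k hk a (by simp)
    rw [List.foldl_append]
    simp only [List.foldl_cons, List.foldl_nil]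
    generalize l.foldl (greedyStep d) ∅ = W at hs hc
    have hmem : ∀ k, k ∈ greedyStep d W a ↔
        k ∈ W ∨ (k = a ∧ ∀ x ∈ W, Disjoint (d a) (d x)) := by
      intro k
      unfold greedyStep
      rw [← Finset.disjoint_biUnion_right]
      split_ifs with hh
      · rw [Finset.mem_insert]; tauto
      · tauto
    simp only [hmem, List.mem_append, List.mem_singleton]
    refine ⟨fun j hj => by grind, fun j hj => ?_⟩
    have hal : a ∉ l := fun h => irr a (h3' a h)
    rcases hj with hj | rfl
    · have hja : j ≠ a := fun e => hal (e ▸ hj)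
      have := asy _ _ (h3' j hj)
      constructor
      · rintro (h | h)
        · rintro k (hk | hk) hr
          · exact (hc j hj).1 h k hk hr
          · exact absurd (hk.1 ▸ hr) this
        · exact absurd h.1 hja
      · intro h
        exact Or.inl ((hc j hj).2 fun k hk hr => h k (Or.inl hk) hr)
    · constructor
      · rintro (h | h)
        · exact absurd (hs _ h) hal
        · rintro k (hk | hk) hr
          · exact h.2 k hk
          · exact absurd (hk.1 ▸ hr) (irr _)
      · intro h
        exact Or.inr ⟨rfl, fun x hx => h x (Or.inl hx) (h3' x (hs x hx))⟩

/-- strict processing order -/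
def sBefore {n m : ℕ} (d : Fin n → Finset (Fin m)) (b : Fin n → ℝ≥0)
    (i j : Fin n) : Prop :=
  toLex (avgVal d b j, j) < toLex (avgVal d b i, i)

theorem LOS_char {n m : ℕ} (d : Fin n → Finset (Fin m)) (b : Fin n → ℝ≥0) (j : Fin n) :
    j ∈ LOSWinners d b ↔ ∀ k ∈ LOSWinners d b, sBefore d b k j → Disjoint (d j) (d k) := by
  classical
  have hinj : ∀ x y : Fin n, toLex (avgVal d b x, x) = toLex (avgVal d b y, y) → x = y := by
    intro x y h
    exact (Prod.ext_iff.1 (toLex.injective h)).2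
  have ht : Std.Total (procBefore d b) := ⟨fun x y => le_total _ _⟩
  have htr : IsTrans _ (procBefore d b) := ⟨fun x y z h1 h2 => le_trans h2 h1⟩
  have hp : (procList d b).Pairwise (sBefore d b) := by
    have h1 : (procList d b).Pairwise (procBefore d b) := by
      unfold procList
      exact List.pairwise_insertionSort _ _
    have h2 : (procList d b).Nodup := by
      unfold procList
      exact (List.perm_insertionSort _ _).nodup_iff.2 (List.nodup_finRange n)
    exact (h1.and h2).imp fun {x y} h => lt_of_le_of_ne h.1 fun e => h.2 (hinj _ _ e).symm
  have hm : j ∈ procList d b := by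
    unfold procList
    exact (List.perm_insertionSort _ _).mem_iff.2 (List.mem_finRange j)
  exact (greedy_char d (sBefore d b) (fun a => lt_irrefl _) (fun a c h => lt_asymm h) _ hp).2 j hm

theorem LOS_disj {n m : ℕ} (d : Fin n → Finset (Fin m)) (b : Fin n → ℝ≥0) (j k : Fin n)
    (hj : j ∈ LOSWinners d b) (hk : k ∈ LOSWinners d b) (hne : j ≠ k) :
    Disjoint (d j) (d k) := by
  rcases lt_trichotomy (toLex (avgVal d b j, j)) (toLex (avgVal d b k, k)) with h | h | h
  · exact (LOS_char d b j).1 hj k hk h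
  · exact absurd (Prod.ext_iff.1 (toLex.injective h)).2 hne
  · exact ((LOS_char d b k).1 hk j hj h).symm

/-- The LOS greedy mechanism for single-minded buyers satisfies the non-sensitivity
property: if `b` and `b'` are bid profiles that agree on all buyers except possibly
buyer `i`, buyer `i` is a winner under `b`, and buyer `i` is still a winner under `b'`,
then the winner sets coincide (hence every buyer receives exactly the same bundle under
`b` and under `b'`). -/
theorem LOS_nonSensitive {n m : ℕ} (d : Fin n → Finset (Fin m))
    (hd : ∀ i, (d i).Nonempty) (b b' : Fin n → ℝ≥0) (i : Fin n)
    (hagree : ∀ j : Fin n, j ≠ i → b' j = b j)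
    (hw : i ∈ LOSWinners d b) (hw' : i ∈ LOSWinners d b') :
    LOSWinners d b' = LOSWinners d b := by
  have hs : ∀ k j, k ≠ i → j ≠ i → (sBefore d b' k j ↔ sBefore d b k j) := by
    intro k j hk hj
    simp only [sBefore, avgVal, hagree k hk, hagree j hj]
  have wf : WellFounded (sBefore d b) := by
    have : IsTrans _ (sBefore d b) := ⟨fun x y z h1 h2 => lt_trans h2 h1⟩
    have : Std.Irrefl (sBefore d b) := ⟨fun x => lt_irrefl _⟩
    exact Finite.wellFounded_of_trans_of_irrefl _
  ext j
  induction j using wf.induction with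
  | _ j ih =>
    by_cases hji : j = i
    · subst hji; exact iff_of_true hw' hw
    constructor
    · intro h
      rw [LOS_char]
      intro k hk hr
      by_cases hki : k = i
      · subst hki; exact LOS_disj d b' j k h hw' hji
      · exact (LOS_char d b' j).1 h k ((ih k hr).2 hk) ((hs k j hki hji).2 hr)
    · intro h
      rw [LOS_char]
      intro k hk hr
      by_cases hki : k = i
      · subst hki; exact LOS_disj d b j k h hw hji
      · have hr' := (hs k j hki hji).1 hr
        exact (LOS_char d b j).1 h k ((ih k hr').1 hk) hr'
end

section
/- In the LOS greedy mechanism for single-minded buyers, winning is monotone in one's own bid: if b and b' are bid profiles that agree on all buyers except buyer i, with b'_i ≥ b_i, and buyer i is a winner under b (i.e., i ∈ W(b)), then buyer i is also a winner under b' (i.e., i ∈ W(b')). -/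
open scoped NNReal

theorem aux_subset {n m : ℕ} (d : Fin n → Finset (Fin m)) (l : List (Fin n)) :
    ∀ W : Finset (Fin n), W ⊆ l.foldl (greedyStep d) W := by
  induction l with
  | nil => intro W; simp
  | cons a l ih =>
    intro W
    refine subset_trans ?_ (ih _)
    unfold greedyStep
    split_ifs
    · exact Finset.subset_insert _ _
    · exact subset_rfl

theorem aux_mem {n m : ℕ} (d : Fin n → Finset (Fin m)) (i : Fin n) (l : List (Fin n))
    (hi : i ∉ l) : ∀ W : Finset (Fin n), i ∈ l.foldl (greedyStep d) W → i ∈ W := by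
  induction l with
  | nil => intro W h; simpa using h
  | cons a l ih =>
    intro W h
    have h1 := ih (fun h => hi (List.mem_cons_of_mem _ h)) _ h
    have ha : i ≠ a := fun h => hi (by simp [h])
    unfold greedyStep at h1
    split_ifs at h1
    · simpa [ha] using h1
    · exact h1

theorem aux_split {n m : ℕ} (d : Fin n → Finset (Fin m)) (b : Fin n → ℝ≥0) (i : Fin n) :
    ∃ P S, procList d b = P ++ i :: S ∧ i ∉ P ∧ i ∉ S ∧ (P ++ S).Pairwise (procBefore d b) ∧
      (∀ x ∈ P, procBefore d b x i) ∧ (∀ x ∈ S, procBefore d b i x) ∧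
      (i :: (P ++ S)).Perm (List.finRange n) := by
  classical
  have hp : (procList d b).Perm (List.finRange n) := List.perm_insertionSort _ _
  have hs : (procList d b).Pairwise (procBefore d b) := by
    haveI : Std.Total (procBefore d b) := ⟨fun x y => le_total _ _⟩
    haveI : IsTrans _ (procBefore d b) := ⟨fun x y z h1 h2 => le_trans h2 h1⟩
    exact List.pairwise_insertionSort _ _
  have hn : (procList d b).Nodup := hp.nodup_iff.2 (List.nodup_finRange n)
  have hm : i ∈ procList d b := hp.mem_iff.2 (List.mem_finRange i)
  obtain ⟨P, S, h⟩ := List.append_of_mem hm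
  rw [h] at hp hs hn
  have hn' := (List.perm_middle.nodup_iff).1 hn
  simp only [List.nodup_cons, List.mem_append, not_or] at hn'
  have hs2 := hs
  rw [List.pairwise_append] at hs2
  refine ⟨P, S, h, hn'.1.1, hn'.1.2, ?_, ?_, ?_, List.perm_middle.symm.trans hp⟩
  · exact hs.sublist (by simp)
  · intro x hx; exact hs2.2.2 x hx i (by simp)
  · exact (List.pairwise_cons.1 hs2.2.1).1

theorem aux_win {n m : ℕ} (d : Fin n → Finset (Fin m)) (P S : List (Fin n)) (i : Fin n)
    (hP : i ∉ P) (hS : i ∉ S) : i ∈ (P ++ i :: S).foldl (greedyStep d) ∅ ↔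
      Disjoint (d i) ((P.foldl (greedyStep d) ∅).biUnion d) := by
  rw [List.foldl_append, List.foldl_cons]
  constructor
  · intro h
    have h1 := aux_mem d i S hS _ h
    by_contra hc
    rw [greedyStep, if_neg hc] at h1
    simpa using aux_mem d i P hP _ h1
  · intro h
    apply aux_subset
    rw [greedyStep, if_pos h]
    exact Finset.mem_insert_self _ _

/-- In the LOS greedy mechanism for single-minded buyers, winning is monotone in one's
own bid: if `b` and `b'` agree on all buyers except buyer `i`, with `b' i ≥ b i`, and
buyer `i` is a winner under `b`, then buyer `i` is also a winner under `b'`. -/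
theorem LOS_winning_monotone {n m : ℕ} (d : Fin n → Finset (Fin m))
    (hd : ∀ i, (d i).Nonempty) (b b' : Fin n → ℝ≥0) (i : Fin n)
    (hagree : ∀ j : Fin n, j ≠ i → b' j = b j) (hge : b i ≤ b' i)
    (hw : i ∈ LOSWinners d b) : i ∈ LOSWinners d b' := by
  obtain ⟨P, S, h, hP, hS, hs, hPi, hSi, hp⟩ := aux_split d b i
  obtain ⟨P', S', h', hP', hS', hs', hPi', hSi', hp'⟩ := aux_split d b' i
  have hav : ∀ j, j ≠ i → avgVal d b' j = avgVal d b j := fun j hj => by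
    simp [avgVal, hagree j hj]
  have havi : avgVal d b i ≤ avgVal d b' i := by
    unfold avgVal
    gcongr
  have hanti : ∀ x y, procBefore d b x y → procBefore d b y x → x = y := fun x y h1 h2 => by
    have := le_antisymm h1 h2
    simpa using (congrArg (fun z => (ofLex z).2) this).symm
  have heq : P' ++ S' = P ++ S := by
    apply List.Perm.eq_of_pairwise (le := procBefore d b) (fun x y _ _ => hanti x y) _ hs
    · exact (List.perm_cons i).1 (hp'.trans hp.symm)
    · refine hs'.imp_of_mem ?_
      intro x y hx hy hxy
      have hx' : x ≠ i := by rintro rfl; simp_all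
      have hy' : y ≠ i := by rintro rfl; simp_all
      simpa [procBefore, hav x hx', hav y hy'] using hxy
  have hpre : ∃ T, P = P' ++ T := by
    rcases List.append_eq_append_iff.1 heq with ⟨T, h1, h2⟩ | ⟨T, h1, h2⟩
    · exact ⟨T, h1⟩
    · cases T with
      | nil => exact ⟨[], by simpa using h1.symm⟩
      | cons x T =>
        exfalso
        have hxP : x ∈ P' := by simp [h1]
        have hxS : x ∈ S := by simp [h2]
        have hx' : x ≠ i := by rintro rfl; exact hS hxS
        have h3 := hPi' x hxP
        apply hx'
        refine hanti x i ?_ (hSi x hxS)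
        unfold procBefore at h3 ⊢
        rw [hav x hx'] at h3
        refine le_trans ?_ h3
        exact Prod.Lex.toLex_mono ⟨havi, le_rfl⟩
  obtain ⟨T, rfl⟩ := hpre
  unfold LOSWinners at hw ⊢
  rw [h, aux_win d _ _ _ hP hS] at hw
  rw [h', aux_win d _ _ _ hP' hS']
  refine hw.mono_right (Finset.biUnion_subset_biUnion_of_subset_left d ?_)
  rw [List.foldl_append]
  exact aux_subset d T _
end

section
/- The LOS mechanism with the next-in-order payment rule is individually rational for winners: for every bid profile b and every winner i ∈ W(b), the payment of i, which equals av_j · |d_i| where j is the buyer immediately following i in the processing order (and equals 0 if i is the last buyer in the order), is at most her bid b_i. -/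
open scoped NNReal

/-- The LOS payment of buyer `i`: `av j * |d i|` where `j` is the buyer immediately
following `i` in the processing order, and `0` if `i` is the last buyer in the order. -/
noncomputable def LOSPayment {n m : ℕ} (d : Fin n → Finset (Fin m)) (b : Fin n → ℝ≥0)
    (i : Fin n) : ℝ≥0 :=
  match (procList d b).dropWhile (fun x => x != i) with
  | _ :: j :: _ => avgVal d b j * ((d i).card : ℝ≥0)
  | _ => 0

/-- The LOS mechanism with the next-in-order payment rule is individually rational for
winners: for every bid profile `b` and every winner `i ∈ W(b)`, the payment of `i` is at
most her bid `b i`. -/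
theorem LOS_individuallyRational {n m : ℕ} (d : Fin n → Finset (Fin m))
    (hd : ∀ i, (d i).Nonempty) (b : Fin n → ℝ≥0) (i : Fin n)
    (hw : i ∈ LOSWinners d b) : LOSPayment d b i ≤ b i := by
  have htot : Std.Total (procBefore d b) := ⟨fun x y => le_total _ _⟩
  have htr : IsTrans (Fin n) (procBefore d b) := ⟨fun x y z h1 h2 => le_trans h2 h1⟩
  have hs : (procList d b).Pairwise (procBefore d b) := by
    classical
    exact List.pairwise_insertionSort _ _
  have hsub := hs.sublist (List.dropWhile_sublist (fun x => x != i))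
  unfold LOSPayment
  split
  · rename_i x j l heq
    rw [heq] at hsub
    have hx : x = i := by
      have := List.head?_dropWhile_not (fun x => x != i) (procList d b)
      rw [heq] at this
      simpa using this
    subst hx
    have h : procBefore d b x j := List.rel_of_pairwise_cons hsub (by simp)
    have hle : avgVal d b j ≤ avgVal d b x := by
      unfold procBefore at h
      rw [Prod.Lex.toLex_le_toLex] at h
      rcases h with h | h
      · exact le_of_lt h
      · exact le_of_eq h.1
    have hc : ((d x).card : ℝ≥0) ≠ 0 := by
      exact_mod_cast (Finset.card_pos.mpr (hd x)).ne'
    calc avgVal d b j * ((d x).card : ℝ≥0) ≤ avgVal d b x * ((d x).card : ℝ≥0) := by gcongr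
      _ = b x := by unfold avgVal; exact div_mul_cancel₀ _ hc
  · exact zero_le
end

section
/- Greedy exploration with welfare-maximizing rounds never loses welfare relative to the initial buyer pool (abstract form of Theorem 2): let R ⊆ B be a set of buyers, let T ≥ 1, and suppose we are given buyer sets R ⊆ S_1 ⊆ S_2 ⊆ ⋯ ⊆ S_T ⊆ B, winner sets W_0 = ∅ and W_t = W_{t−1} ∪ {w_t} for 1 ≤ t ≤ T−1, and item pools I_1 = M and I_{t+1} = I_t \ a^{(t)}(w_t) for 1 ≤ t ≤ T−1, where for each 1 ≤ t ≤ T−1, a^{(t)} is a feasible allocation of items from I_t to buyers in S_t \ W_{t−1} whose social welfare equals OPT(S_t \ W_{t−1}, I_t), and w_t ∈ S_t \ W_{t−1}. Then Σ_{t=1}^{T−1} v_{w_t}(a^{(t)}(w_t)) + OPT(S_T \ W_{T−1}, I_T) ≥ OPT(R, M). -/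
open scoped NNReal

/-- A feasible allocation of items from the pool `I` to the buyers in `S`: every buyer
in `S` receives a bundle of items from `I`, and the bundles of buyers in `S` are
pairwise disjoint. -/
def Feasible {B M : Type*} (S : Finset B) (I : Finset M) (a : B → Finset M) : Prop :=
  (∀ i ∈ S, a i ⊆ I) ∧ (S : Set B).PairwiseDisjoint a

/-- The social welfare of an allocation `a` over the buyer set `S` under valuations `v`. -/
def welfare {B M : Type*} (v : B → Finset M → ℝ≥0) (S : Finset B) (a : B → Finset M) :
    ℝ≥0 :=
  ∑ i ∈ S, v i (a i)

/-- `OPT v S I`: the maximum social welfare over all feasible allocations of items from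
`I` to buyers in `S`. -/
noncomputable def OPT {B M : Type*} (v : B → Finset M → ℝ≥0) (S : Finset B)
    (I : Finset M) : ℝ≥0 :=
  sSup {w : ℝ≥0 | ∃ a : B → Finset M, Feasible S I a ∧ welfare v S a = w}

theorem aux_le_OPT {B M : Type*} [Fintype M] [DecidableEq B]
    (v : B → Finset M → ℝ≥0)
    (hmono : ∀ i : B, ∀ x y : Finset M, x ⊆ y → v i x ≤ v i y)
    (S S' : Finset B) (hS : S ⊆ S') (I : Finset M) (b : B → Finset M)
    (hb : Feasible S I b) : welfare v S b ≤ OPT v S' I := by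
  have hbdd : BddAbove {w : ℝ≥0 | ∃ a : B → Finset M, Feasible S' I a ∧ welfare v S' a = w} := by
    refine ⟨∑ i ∈ S', v i Finset.univ, ?_⟩
    rintro _ ⟨a, _, rfl⟩
    exact Finset.sum_le_sum fun i _ => hmono i _ _ (Finset.subset_univ _)
  have hf : Feasible S' I (fun i => if i ∈ S then b i else ∅) := by
    refine ⟨fun i _ => ?_, fun i _ j _ hij => ?_⟩
    · by_cases h : i ∈ S
      · simpa [h] using hb.1 i h
      · simp [h]
    · by_cases h : i ∈ S <;> by_cases h' : j ∈ S <;> simp [Function.onFun, h, h']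
      exact hb.2 h h' hij
  refine le_trans ?_ (le_csSup hbdd ⟨_, hf, rfl⟩)
  unfold welfare
  refine le_trans (le_of_eq ?_) (Finset.sum_le_sum_of_subset hS)
  exact Finset.sum_congr rfl fun i hi => by simp [hi]

theorem aux_OPT_mono {B M : Type*} [Fintype M] [DecidableEq B]
    (v : B → Finset M → ℝ≥0)
    (hmono : ∀ i : B, ∀ x y : Finset M, x ⊆ y → v i x ≤ v i y)
    (S S' : Finset B) (hS : S ⊆ S') (I : Finset M) : OPT v S I ≤ OPT v S' I := by
  refine csSup_le ⟨_, fun _ => ∅, ⟨by simp, fun i _ j _ _ => by simp [Function.onFun]⟩, rfl⟩ ?_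
  rintro _ ⟨a, ha, rfl⟩
  exact aux_le_OPT v hmono S S' hS I a ha

/-- Greedy exploration with welfare-maximizing rounds never loses welfare relative to
the initial buyer pool (abstract form of Theorem 2): given nested buyer sets
`R ⊆ S 1 ⊆ ⋯ ⊆ S T`, winner sets `W 0 = ∅`, `W t = W (t-1) ∪ {w t}`, item pools
`I 1 = M`, `I (t+1) = I t \ a t (w t)`, where in each round `1 ≤ t ≤ T-1` the allocation
`a t` is a feasible allocation of items from `I t` to buyers in `S t \ W (t-1)` whose
social welfare equals `OPT (S t \ W (t-1)) (I t)` and `w t ∈ S t \ W (t-1)`, we have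
`∑ t ∈ [1, T-1], v (w t) (a t (w t)) + OPT (S T \ W (T-1)) (I T) ≥ OPT R M`. -/
theorem greedy_exploration_welfare {B M : Type*} [Fintype B] [Fintype M]
    [DecidableEq B] [DecidableEq M]
    (v : B → Finset M → ℝ≥0)
    (hmono : ∀ i : B, ∀ x y : Finset M, x ⊆ y → v i x ≤ v i y)
    (hzero : ∀ i : B, v i ∅ = 0)
    (R : Finset B) (T : ℕ) (hT : 1 ≤ T)
    (S W : ℕ → Finset B) (I : ℕ → Finset M) (w : ℕ → B) (a : ℕ → B → Finset M)
    (hRS : R ⊆ S 1)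
    (hSmono : ∀ t, 1 ≤ t → t < T → S t ⊆ S (t + 1))
    (hW0 : W 0 = ∅)
    (hWt : ∀ t, 1 ≤ t → t ≤ T - 1 → W t = W (t - 1) ∪ {w t})
    (hI1 : I 1 = Finset.univ)
    (hIt : ∀ t, 1 ≤ t → t ≤ T - 1 → I (t + 1) = I t \ a t (w t))
    (hfeas : ∀ t, 1 ≤ t → t ≤ T - 1 → Feasible (S t \ W (t - 1)) (I t) (a t))
    (hopt : ∀ t, 1 ≤ t → t ≤ T - 1 →
      welfare v (S t \ W (t - 1)) (a t) = OPT v (S t \ W (t - 1)) (I t))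
    (hwt : ∀ t, 1 ≤ t → t ≤ T - 1 → w t ∈ S t \ W (t - 1)) :
    OPT v R Finset.univ ≤
      (∑ t ∈ Finset.Icc 1 (T - 1), v (w t) (a t (w t))) +
        OPT v (S T \ W (T - 1)) (I T) := by
  have key : ∀ n, n + 1 ≤ T → OPT v R Finset.univ ≤
      (∑ t ∈ Finset.Icc 1 n, v (w t) (a t (w t))) + OPT v (S (n + 1) \ W n) (I (n + 1)) := by
    intro n
    induction n with
    | zero =>
      intro _
      simpa [hW0, hI1] using aux_OPT_mono v hmono R (S 1) hRS Finset.univ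
    | succ n ih =>
      intro hn
      refine (ih (by omega)).trans ?_
      rw [Finset.sum_Icc_succ_top (by omega), add_assoc]
      refine add_le_add le_rfl ?_
      have h1 : 1 ≤ n + 1 := by omega
      have h2 : n + 1 ≤ T - 1 := by omega
      have hW := hWt _ h1 h2
      have hI := hIt _ h1 h2
      have hf := hfeas _ h1 h2
      have ho := hopt _ h1 h2
      have hw := hwt _ h1 h2
      have hS := hSmono _ h1 (by omega)
      simp only [Nat.add_sub_cancel] at hW hf ho hw
      rw [← ho]
      unfold welfare
      rw [← Finset.add_sum_erase _ _ hw]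
      refine add_le_add le_rfl ?_
      refine aux_le_OPT v hmono _ _ ?_ _ (a (n + 1)) ⟨?_, ?_⟩
      · intro i hi
        simp only [Finset.mem_erase, Finset.mem_sdiff] at hi
        simp only [hW, Finset.mem_sdiff, Finset.mem_union, Finset.mem_singleton]
        exact ⟨hS hi.2.1, by tauto⟩
      · intro i hi
        rw [Finset.mem_erase] at hi
        rw [hI, Finset.subset_sdiff]
        exact ⟨hf.1 i hi.2, hf.2 hi.2 hw hi.1⟩
      · exact hf.2.subset (by exact_mod_cast Finset.erase_subset _ _)
  obtain ⟨n, rfl⟩ : ∃ n, T = n + 1 := ⟨T - 1, by omega⟩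
  simpa using key n le_rfl
end
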